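/- arXiv:1601.07975 — 2 statements merged into one kernel-verified Lean document; each statement's English description precedes it below -/
import Mathlib

section
/- Let b ≥ 2, k ≥ 1, j ≥ 1. The number of spanning trees of the astute graph G_{k−1,j} oriented towards any fixed node equals b^{j·b^{k−1} − k}. -/
/-- The target of the edge of the astute graph `G_{s,n}` leaving the node `p`
with label `a`: the word of `p` is shifted one place (dropping its first symbol
and appending `a`) and the counter is increased by one modulo `n`. -/
def astuteStep (b s n : ℕ) (p : (Fin s → Fin b) × ZMod n) (a : Fin b) :
    (Fin s → Fin b) × ZMod n :=
  (fun i => if h : (i : ℕ) + 1 < s then p.1 ⟨(i : ℕ) + 1, h⟩ else a, p.2 + 1)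

open Matrix Finset

theorem det_add_const {V : Type*} [Fintype V] [DecidableEq V] (M : Matrix V V ℚ) (ρ : V) (c : ℚ)
    (hr : ∀ p, ∑ q, M p q = 0) (hc : ∀ q, ∑ p, M p q = 0) :
    (M + Matrix.of fun _ _ => c).det = c * (Fintype.card V : ℚ)^2 *
      (Matrix.of fun p q : {p : V // p ≠ ρ} => M p q).det := by
  set n : ℚ := (Fintype.card V : ℚ) with hn
  have h1 := Matrix.det_updateRow_sum (M + Matrix.of fun _ _ => c) ρ (fun _ => 1)
  have e1 : (∑ k, (1:ℚ) • (M + (Matrix.of fun _ _ => c : Matrix V V ℚ)) k) = (n * c) • (fun _ => (1:ℚ)) := by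
    ext q
    rw [Finset.sum_apply]
    simp only [Pi.smul_apply, one_smul, smul_eq_mul, mul_one]
    change ∑ p, 1 * (M p q + c) = n * c
    simp [Finset.sum_add_distrib, hc, hn]
  rw [e1, Matrix.det_updateRow_smul] at h1
  have h2 : ((M + Matrix.of fun _ _ => c).updateRow ρ (fun _ => (1:ℚ))).det
      = (M.updateRow ρ (fun _ => (1:ℚ))).det := by
    apply Matrix.det_eq_of_forall_row_eq_smul_add_const (fun i => if i = ρ then 0 else c) ρ (by simp)
    intro i q
    by_cases h : i = ρ
    · subst h; simp
    · simp [h, Matrix.updateRow_ne]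
  have h3 := Matrix.det_updateCol_sum (M.updateRow ρ (fun _ => (1:ℚ))) ρ (fun _ => 1)
  rw [Matrix.twoBlockTriangular_det _ (fun i => i = ρ)] at h3
  rotate_left
  · rintro i hi q rfl
    simp [Matrix.updateRow_ne hi, hr]
  have b1 : (toSquareBlockProp ((M.updateRow ρ fun _ => (1:ℚ)).updateCol ρ
      fun k => ∑ i, (1:ℚ) • (M.updateRow ρ fun _ => (1:ℚ)) k i) fun i => i = ρ).det = n := by
    haveI : Unique {p // p = ρ} := ⟨⟨⟨ρ, rfl⟩⟩, by rintro ⟨_, rfl⟩; rfl⟩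
    rw [Matrix.det_unique]
    have : ((default : {p // p = ρ}) : V) = ρ := (default : {p // p = ρ}).2
    simp [toSquareBlockProp, this, hn]
  have b2 : (toSquareBlockProp ((M.updateRow ρ fun _ => (1:ℚ)).updateCol ρ
      fun k => ∑ i, (1:ℚ) • (M.updateRow ρ fun _ => (1:ℚ)) k i) fun i => ¬ i = ρ).det =
      (Matrix.of fun p q : {p : V // p ≠ ρ} => M p q).det := by
    congr 1
    ext p q
    simp [toSquareBlockProp, Matrix.updateCol_ne q.2, Matrix.updateRow_ne p.2]
  have h4 : n * (Matrix.of fun p q : {p : V // p ≠ ρ} => M p q).det =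
      (1:ℚ) • (M.updateRow ρ fun _ => (1:ℚ)).det := by
    rw [← h3]
    congr 1
    · refine Eq.trans b1.symm ?_
      congr!
    · rw [← b2]
  rw [h2] at h1
  simp only [one_smul] at h1 h4
  rw [← h1, ← h4]
  ring

theorem tree_count {V L : Type*} [Fintype V] [DecidableEq V] [Fintype L] [DecidableEq L]
    (step : V → L → V) (ρ : V) :
    (Nat.card {g : {p : V // p ≠ ρ} → L // ∀ p : V, ∃ m : ℕ,
      (fun q => if h : q = ρ then ρ else step q (g ⟨q, h⟩))^[m] p = ρ} : ℚ) =
    (Matrix.of fun p q : {p : V // p ≠ ρ} =>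
      ∑ a : L, ((if (p : V) = q then (1:ℚ) else 0) - if step p a = q then 1 else 0)).det := by
  classical
  have key : (Matrix.of fun p q : {p : V // p ≠ ρ} =>
      ∑ a : L, ((if (p : V) = q then (1:ℚ) else 0) - if step p a = q then 1 else 0)).det
      = ∑ g : {p : V // p ≠ ρ} → L, (Matrix.of fun p q : {p : V // p ≠ ρ} =>
      ((if (p : V) = q then (1:ℚ) else 0) - if step p (g p) = q then 1 else 0)).det := by
    have := (Matrix.detRowAlternating (R := ℚ) (n := {p : V // p ≠ ρ})).toMultilinearMap.map_sum
      (fun p (a : L) => fun q : {p : V // p ≠ ρ} => ((if (p : V) = q then (1:ℚ) else 0) - if step p a = q then 1 else 0))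
    refine Eq.trans ?_ this
    change Matrix.det _ = Matrix.det _
    congr 1
    ext p q
    simp [Finset.sum_apply]
  rw [key, Nat.card_eq_fintype_card, Fintype.card_subtype, Finset.card_filter]
  push_cast
  refine Finset.sum_congr rfl fun g _ => ?_
  set f : V → V := (fun q => if h : q = ρ then ρ else step q (g ⟨q, h⟩)) with hf
  have hρ : f ρ = ρ := by simp [hf]
  have hfp : ∀ p : {p : V // p ≠ ρ}, step p (g p) = f p := by
    intro p; simp [hf, p.2]
  simp only [hfp]
  split_ifs with H
  · set N : Matrix {p : V // p ≠ ρ} {p : V // p ≠ ρ} ℚ := Matrix.of fun p q => if f p = q then 1 else 0 with hN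
    have hNa : ∀ p q, N p q = if f p = q then 1 else 0 := fun p q => rfl
    have hpow : ∀ m, ∀ p q : {p : V // p ≠ ρ}, (N ^ m) p q = if f^[m] p = q then 1 else 0 := by
      intro m
      induction m with
      | zero =>
        intro p q
        by_cases h : p = q
        · subst h; simp
        · rw [pow_zero, Function.iterate_zero_apply, if_neg (fun h' => h (Subtype.ext h')),
            Matrix.one_apply_ne h]
      | succ m ih =>
        intro p q
        rw [pow_succ', Matrix.mul_apply, Function.iterate_succ_apply]
        simp only [ih, hNa]
        by_cases h : f p = ρ
        · rw [h, Function.iterate_fixed hρ, if_neg (Ne.symm q.2)]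
          refine Finset.sum_eq_zero fun x _ => ?_
          rw [if_neg (Ne.symm x.2), zero_mul]
        · rw [Finset.sum_eq_single ⟨f p, h⟩]
          · simp
          · intro x _ hx
            rw [if_neg, zero_mul]
            intro h'; exact hx (Subtype.ext h'.symm)
          · simp
    choose m hm using H
    have hnil : IsNilpotent N := by
      refine ⟨∑ p, m p, ?_⟩
      ext p q
      rw [hpow, if_neg]; · rfl
      have : m p ≤ ∑ p, m p := Finset.single_le_sum (fun _ _ => Nat.zero_le _) (Finset.mem_univ _)
      obtain ⟨d, hd⟩ := Nat.exists_eq_add_of_le this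
      rw [hd, add_comm, Function.iterate_add_apply, hm, Function.iterate_fixed hρ]
      exact Ne.symm q.2
    have hch := (Matrix.isNilpotent_charpoly_sub_pow_of_isNilpotent hnil).eq_zero
    have := congrArg (Polynomial.eval 1) hch
    rw [Polynomial.eval_sub, Matrix.eval_charpoly] at this
    simp only [Polynomial.eval_pow, Polynomial.eval_X, one_pow, Polynomial.eval_zero] at this
    rw [sub_eq_zero] at this
    refine Eq.trans this.symm ?_
    congr 1
    ext p q
    by_cases h : p = q
    · subst h; simp [hNa]
    · rw [Matrix.of_apply, if_neg (fun h' => h (Subtype.ext h'))]; simp [h, hNa]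
  · push Not at H
    obtain ⟨p, hp⟩ := H
    symm
    apply Matrix.exists_mulVec_eq_zero_iff.1
    refine ⟨fun q => if ∃ m, f^[m] q = ρ then 0 else 1, ?_, ?_⟩
    · intro h
      have := congrFun h ⟨p, hp 0⟩
      simp [hp] at this
    · ext q
      simp only [Matrix.mulVec, dotProduct, Matrix.of_apply, sub_mul, Finset.sum_sub_distrib, Pi.zero_apply]
      have hq : (∃ m, f^[m] (f q) = ρ) ↔ ∃ m, f^[m] q = ρ := by
        constructor
        · rintro ⟨m, h⟩; exact ⟨m+1, by simpa using h⟩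
        · rintro ⟨m, h⟩; exact ⟨m, by rw [← Function.iterate_succ_apply, Function.iterate_succ_apply', h, hρ]⟩
      rw [Finset.sum_eq_single q (by
        intro x _ hx
        rw [if_neg (fun h => hx (Subtype.ext h.symm)), zero_mul]) (by simp)]
      by_cases h : f q = ρ
      · rw [Finset.sum_eq_zero fun x _ => by rw [if_neg (by rw [h]; exact Ne.symm x.2), zero_mul],
          if_pos (show ∃ m, f^[m] q = ρ from ⟨1, by simpa using h⟩)]
        simp
      · rw [Finset.sum_eq_single ⟨f q, h⟩ (by
          intro x _ hx
          rw [if_neg (fun h => hx (Subtype.ext h.symm)), zero_mul]) (by simp)]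
        simp [hq]

theorem astute_dropped (b s n : ℕ) [NeZero n] (q : (Fin s → Fin b) × ZMod n) :
    ∑ p : (Fin s → Fin b) × ZMod n, ∑ a : Fin b, (if astuteStep b s n p a = q then (1:ℚ) else 0) = b := by
  let φ : ((Fin s → Fin b) × ZMod n) × Fin b → ((Fin s → Fin b) × ZMod n) × Fin b :=
    fun x => (astuteStep b s n x.1 x.2, if h : 0 < s then x.1.1 ⟨0, h⟩ else x.2)
  have hφ : Function.Injective φ := by
    rintro ⟨⟨w, i⟩, a⟩ ⟨⟨w', i'⟩, a'⟩ h
    simp only [φ, astuteStep, Prod.mk.injEq, add_left_inj] at h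
    obtain ⟨⟨h1, h2⟩, h3⟩ := h
    have hw : w = w' := by
      ext ⟨t, ht⟩
      rcases t with _ | t
      · rw [dif_pos ht, dif_pos ht] at h3
        rw [h3]
      · have := congrFun h1 ⟨t, by omega⟩
        simp only [dif_pos ht] at this
        rw [this]
    have ha : a = a' := by
      rcases Nat.eq_zero_or_pos s with h0 | h0
      · rw [dif_neg (by omega), dif_neg (by omega)] at h3; exact h3
      · have := congrFun h1 ⟨s - 1, by omega⟩
        simp only at this
        rw [dif_neg (by omega), dif_neg (by omega)] at this; exact this
    rw [hw, ha, h2]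
  have hb := Function.Injective.bijective_of_finite hφ
  rw [← Fintype.sum_prod_type']
  have := hb.sum_comp (fun y : ((Fin s → Fin b) × ZMod n) × Fin b => if y.1 = q then (1:ℚ) else 0)
  refine Eq.trans this ?_
  rw [Fintype.sum_prod_type]
  rw [Finset.sum_comm]
  simp

/-- Adjacency matrix. -/
def astuteAdj (b s n : ℕ) : Matrix ((Fin s → Fin b) × ZMod n) ((Fin s → Fin b) × ZMod n) ℚ :=
  Matrix.of fun p q => ∑ a : Fin b, if astuteStep b s n p a = q then 1 else 0

/-- Laplacian. -/
def astuteLap (b s n : ℕ) : Matrix ((Fin s → Fin b) × ZMod n) ((Fin s → Fin b) × ZMod n) ℚ :=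
  (b:ℚ) • (1 : Matrix _ _ ℚ) - astuteAdj b s n

theorem astute_rec (b s n : ℕ) [NeZero n] (hb : 0 < b) (c : ℚ) :
    (astuteLap b (s+1) n + Matrix.of fun _ _ => c).det * (b:ℚ) ^ (n * b^s)
    = (b:ℚ) ^ (n * b^(s+1)) * (astuteLap b s n + Matrix.of fun _ _ => b * c).det := by
  have hb0 : (b:ℚ) ≠ 0 := by positivity
  let B : Matrix ((Fin (s+1) → Fin b) × ZMod n) ((Fin s → Fin b) × ZMod n) ℚ :=
    Matrix.of fun e v => if (Fin.tail e.1, e.2 + 1) = v then 1 else 0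
  let C : Matrix ((Fin s → Fin b) × ZMod n) ((Fin (s+1) → Fin b) × ZMod n) ℚ :=
    Matrix.of fun v e => if (Fin.init e.1, e.2) = v then 1 else 0
  let J : Matrix ((Fin s → Fin b) × ZMod n) ((Fin s → Fin b) × ZMod n) ℚ := Matrix.of fun _ _ => 1
  have hBC : B * C = astuteAdj b (s+1) n := by
    ext e e'
    simp only [Matrix.mul_apply, B, C, Matrix.of_apply, astuteAdj]
    simp only [ite_mul, one_mul, zero_mul, Finset.sum_ite_eq, Finset.mem_univ, if_true]
    obtain ⟨w, i⟩ := e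
    obtain ⟨w', i'⟩ := e'
    rw [Finset.sum_eq_single (w' (Fin.last s))]
    · congr 1
      simp only [astuteStep, Prod.mk.injEq, eq_iff_iff]
      constructor
      · rintro ⟨h1, h2⟩
        refine ⟨?_, h2.symm⟩
        ext t
        refine Fin.lastCases ?_ (fun t => ?_) t
        · simp
        · have := congrFun h1 t
          simp [Fin.init, Fin.tail] at this
          simp [this]
          rfl
      · rintro ⟨h1, h2⟩
        refine ⟨?_, h2.symm⟩
        ext t
        have := congrFun h1 t.castSucc
        simp at this
        simp [Fin.init, Fin.tail, ← this]
        rfl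
    · intro a _ ha
      rw [if_neg]
      intro h
      have := congrFun (congrArg Prod.fst h) (Fin.last s)
      simp [astuteStep] at this
      exact ha this
    · simp
  have hCB : C * B = astuteAdj b s n := by
    ext v v'
    simp only [Matrix.mul_apply, B, C, Matrix.of_apply, astuteAdj]
    rw [Fintype.sum_prod_type_right, Finset.sum_eq_single v.2]
    · rw [← Equiv.sum_comp (Fin.snocEquiv (fun _ : Fin (s+1) => Fin b)) (fun x =>
        (if (Fin.init x, v.2) = v then (1:ℚ) else 0) *
          if (Fin.tail x, v.2 + 1) = v' then 1 else 0), Fintype.sum_prod_type]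
      refine Finset.sum_congr rfl fun a _ => ?_
      rw [Finset.sum_eq_single v.1]
      · have h1 : Fin.init (Fin.snocEquiv (fun _ : Fin (s+1) => Fin b) (a, v.1)) = v.1 := by
          simp [Fin.snocEquiv]
        have h2 : (Fin.tail (Fin.snocEquiv (fun _ : Fin (s+1) => Fin b) (a, v.1)), v.2 + 1)
            = astuteStep b s n v a := by
          simp only [astuteStep, Prod.mk.injEq, and_true]
          ext t
          simp only [Fin.snocEquiv, Fin.tail, Equiv.coe_fn_mk, Fin.snoc, Fin.val_succ]
          split_ifs <;> rfl
        rw [h1, h2]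
        simp
      · intro w _ hw
        have h1 : Fin.init (Fin.snocEquiv (fun _ : Fin (s+1) => Fin b) (a, w)) = w := by
          simp [Fin.snocEquiv]
        rw [h1, if_neg, zero_mul]
        intro h; exact hw (congrArg Prod.fst h)
      · simp
    · intro i _ hi
      refine Finset.sum_eq_zero fun w _ => ?_
      rw [if_neg, zero_mul]
      intro h; exact hi (congrArg Prod.snd h)
    · simp
  have hBJC : B * J * C = Matrix.of fun _ _ => 1 := by
    ext e e'
    simp [Matrix.mul_apply, B, J, C]
  have hAJ : astuteAdj b s n * J = Matrix.of fun _ _ => (b:ℚ) := by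
    ext e e'
    simp only [Matrix.mul_apply, J, Matrix.of_apply, astuteAdj, mul_one]
    rw [Finset.sum_comm]
    simp
  have e1 : astuteLap b (s+1) n + (Matrix.of fun _ _ => c)
      = (b:ℚ) • (1 - ((b:ℚ)⁻¹ • (B - c • (B * J))) * C) := by
    have : (Matrix.of fun _ _ => c) = c • (B * J * C) := by
      rw [hBJC]; ext; simp
    rw [this, astuteLap, ← hBC, Matrix.smul_mul, smul_sub, smul_smul, mul_inv_cancel₀ hb0, one_smul,
      Matrix.sub_mul, Matrix.smul_mul]
    abel
  have e2 : astuteLap b s n + (Matrix.of fun _ _ => b * c)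
      = (b:ℚ) • (1 - C * ((b:ℚ)⁻¹ • (B - c • (B * J)))) := by
    have : (Matrix.of fun _ _ => b * c) = c • (C * (B * J)) := by
      rw [← Matrix.mul_assoc, hCB, hAJ]; ext; simp [mul_comm]
    rw [this, astuteLap, ← hCB, Matrix.mul_smul, smul_sub, smul_smul, mul_inv_cancel₀ hb0, one_smul,
      Matrix.mul_sub, Matrix.mul_smul]
    abel
  rw [e1, e2, Matrix.det_smul, Matrix.det_smul, Matrix.det_one_sub_mul_comm]
  simp only [Fintype.card_prod, Fintype.card_fun, Fintype.card_fin, ZMod.card]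
  rw [mul_comm n, mul_comm n]
  ring

theorem tau_zero (b n : ℕ) [NeZero n] (ρ : (Fin 0 → Fin b) × ZMod n) :
    (Nat.card {g : {p : (Fin 0 → Fin b) × ZMod n // p ≠ ρ} → Fin b // ∀ p, ∃ m : ℕ,
      (fun q => if h : q = ρ then ρ else astuteStep b 0 n q (g ⟨q, h⟩))^[m] p = ρ}) = b ^ (n - 1) := by
  have H : ∀ g : {p : (Fin 0 → Fin b) × ZMod n // p ≠ ρ} → Fin b, ∀ p, ∃ m : ℕ,
      (fun q => if h : q = ρ then ρ else astuteStep b 0 n q (g ⟨q, h⟩))^[m] p = ρ := by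
    intro g p
    set f := (fun q => if h : q = ρ then ρ else astuteStep b 0 n q (g ⟨q, h⟩)) with hf
    have key : ∀ m : ℕ, f^[m] p = ρ ∨ (f^[m] p).2 = p.2 + m := by
      intro m
      induction m with
      | zero => right; simp
      | succ m ih =>
        rw [Function.iterate_succ_apply']
        by_cases h : f^[m] p = ρ
        · left; rw [h]; simp [hf]
        · right
          have h' := ih.resolve_left h
          have : f (f^[m] p) = astuteStep b 0 n (f^[m] p) (g ⟨_, h⟩) := by
            exact dif_neg h
          rw [this]
          simp only [astuteStep]
          rw [h']; push_cast; ring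
    refine ⟨(ρ.2 - p.2).val, ?_⟩
    rcases key (ρ.2 - p.2).val with h | h
    · exact h
    · apply Prod.ext
      · exact Subsingleton.elim _ _
      · rw [h]; simp
  rw [Nat.card_congr (Equiv.subtypeUnivEquiv H), Nat.card_eq_fintype_card]
  simp [Fintype.card_subtype_compl, ZMod.card]

theorem astute_arith {b n u v x y : ℚ} {s : ℕ} (hb : b ≠ 0) (hn : n ≠ 0) (hu : u ≠ 0)
    (h : 1 * (b^(s+1) * n)^2 * x * u = v * (b * 1 * (b^s * n)^2 * y)) (h' : y * b^(s+1) = u) :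
    x * b^(s+1+1) = v := by
  have hy : (b^(s+1) * n)^2 * u ≠ 0 := by positivity
  apply mul_left_cancel₀ hy
  linear_combination b^(s+2) * h + v * (b^(s+1) * n)^2 * h'

theorem tau (b s n : ℕ) [NeZero n] (hb : 0 < b) (ρ : (Fin s → Fin b) × ZMod n) :
    (Matrix.of fun p q : {p : (Fin s → Fin b) × ZMod n // p ≠ ρ} =>
      ∑ a : Fin b, ((if (p : (Fin s → Fin b) × ZMod n) = q then (1:ℚ) else 0) -
        if astuteStep b s n p a = q then 1 else 0)).det * b ^ (s + 1) = b ^ (n * b ^ s) := by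
  have hb0 : (b:ℚ) ≠ 0 := by positivity
  have hn0 : (n:ℚ) ≠ 0 := by exact_mod_cast NeZero.ne n
  have E : ∀ s, ∀ p q : (Fin s → Fin b) × ZMod n,
      astuteLap b s n p q =
      ∑ a : Fin b, ((if p = q then (1:ℚ) else 0) - if astuteStep b s n p a = q then 1 else 0) := by
    intro s p q
    simp [astuteLap, astuteAdj, Matrix.one_apply, Finset.sum_sub_distrib]
  have D : ∀ s, ∀ c : ℚ, ∀ ρ : (Fin s → Fin b) × ZMod n, 
      (astuteLap b s n + Matrix.of fun _ _ => c).det =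
      c * ((b:ℚ)^s * n)^2 * (Matrix.of fun p q : {p : (Fin s → Fin b) × ZMod n // p ≠ ρ} =>
      ∑ a : Fin b, ((if (p : (Fin s → Fin b) × ZMod n) = q then (1:ℚ) else 0) -
        if astuteStep b s n p a = q then 1 else 0)).det := by
    intro s c ρ
    rw [det_add_const _ ρ]
    · simp only [E]
      simp [ZMod.card]
    · intro p
      simp only [E, Finset.sum_sub_distrib]
      rw [Finset.sum_comm, Finset.sum_comm (f := fun q a => if astuteStep b s n p a = q then (1:ℚ) else 0)]
      simp
    · intro q
      simp only [E, Finset.sum_sub_distrib]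
      rw [astute_dropped]
      simp
  induction s with
  | zero =>
    rw [← tree_count, tau_zero]
    have : n = n - 1 + 1 := (Nat.succ_pred_eq_of_pos (NeZero.pos n)).symm
    push_cast
    rw [← pow_add]
    congr 1
    simp
    omega
  | succ s ih =>
    have ρ' : (Fin s → Fin b) × ZMod n := (fun i => ρ.1 i.castSucc, ρ.2)
    have h := astute_rec b s n hb 1
    rw [D (s+1) 1 ρ, D s _ ρ'] at h
    have h' := ih ρ'
    exact astute_arith (by positivity) hn0 (pow_ne_zero _ hb0) h h'

/-- The number of spanning trees of the astute graph `G_{k−1,j}` oriented towards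
a fixed node `ρ` equals `b^{j·b^{k−1} − k}`. A spanning tree oriented towards `ρ`
is a choice, for each node `p ≠ ρ`, of an outgoing edge (a label `g p`), such that
following the chosen edges from any node eventually reaches `ρ`. -/
theorem spanning_trees_astute (b k j : ℕ) (hb : 2 ≤ b) (hk : 1 ≤ k) (hj : 1 ≤ j)
    [NeZero j] (ρ : (Fin (k - 1) → Fin b) × ZMod j) :
    Nat.card {g : {p : (Fin (k - 1) → Fin b) × ZMod j // p ≠ ρ} → Fin b //
      ∀ p : (Fin (k - 1) → Fin b) × ZMod j,
        ∃ m : ℕ,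
          (fun q => if h : q = ρ then ρ else astuteStep b (k - 1) j q (g ⟨q, h⟩))^[m] p
            = ρ} = b ^ (j * b ^ (k - 1) - k) := by
  have h1 := tree_count (astuteStep b (k-1) j) ρ
  have h2 := tau b (k-1) j (by omega) ρ
  rw [← h1, Nat.sub_add_cancel hk] at h2
  have hle : k ≤ j * b ^ (k-1) := by
    have h3 : k - 1 < b ^ (k-1) := Nat.lt_pow_self (by omega)
    have : 1 * b ^ (k-1) ≤ j * b ^ (k-1) := Nat.mul_le_mul_right _ hj
    omega
  have hb0 : 0 < b ^ k := by positivity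
  apply Nat.eq_of_mul_eq_mul_right hb0
  rw [← pow_add, Nat.sub_add_cancel hle]
  exact_mod_cast h2
end

section
/- Let b ≥ 2, k ≥ 1, and j ≥ 1. The number of Eulerian circuits in the astute graph G_{k−1,j} equals (b!)^{j·b^{k−1}} · b^{−k}. -/
namespace AstuteAux

open Equiv Finset

theorem det_one_sub_nil {α : Type*} [Fintype α] [DecidableEq α] (N : Matrix α α ℚ)
    (h : IsNilpotent N) : (1 - N).det = 1 := by
  have h1 := Matrix.isNilpotent_charpoly_sub_pow_of_isNilpotent h
  have h2 := h1.eq_zero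
  have h3 := Matrix.eval_charpoly N 1
  rw [sub_eq_zero.mp h2] at h3
  simpa using h3.symm

/-- the matrix `1 - P_π + 1 e₀ᵀ` -/
def AM {α : Type*} [DecidableEq α] (π : Perm α) (e : α) : Matrix α α ℚ :=
  Matrix.of fun x y => (if x = y then 1 else 0) - (if y = π x then 1 else 0)
    + (if y = e then 1 else 0)

theorem det_AM_nonfull {α : Type*} [Fintype α] [DecidableEq α] (π : Perm α) (e : α)
    (h : ¬ ∀ x, π.SameCycle e x) : (AM π e).det = 0 := by
  classical
  push Not at h
  obtain ⟨x₀, hx₀⟩ := h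
  rw [← Matrix.exists_mulVec_eq_zero_iff]
  refine ⟨fun x => if π.SameCycle x₀ x then 1 else 0, ?_, ?_⟩
  · intro h
    have := congrFun h x₀
    simp [Perm.SameCycle.refl] at this
  · ext x
    have h1 : ¬ π.SameCycle x₀ e := fun h => hx₀ h.symm
    simp only [Matrix.mulVec, dotProduct, AM, Matrix.of_apply, sub_mul, add_mul,
      Finset.sum_add_distrib, Finset.sum_sub_distrib, ite_mul, one_mul, zero_mul,
      Finset.sum_ite_eq, Finset.sum_ite_eq', Finset.mem_univ, if_true, h1]
    simp

theorem nil_of_full {α : Type*} [Fintype α] [DecidableEq α] (π : Perm α) (e : α)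
    (h : ∀ x, π.SameCycle e x) :
    IsNilpotent (Matrix.of fun x y => if x = e then 0 else if y = π x then (1:ℚ) else 0) := by
  set N : Matrix α α ℚ := Matrix.of fun x y => if x = e then 0 else if y = π x then (1:ℚ) else 0
  have key : ∀ m : ℕ, ∀ x y, (N ^ m) x y ≠ 0 → ∀ i < m, (π ^ i) x ≠ e := by
    intro m
    induction m with
    | zero => intro x y _ i hi; omega
    | succ m ih =>
      intro x y hxy i hi
      rw [pow_succ', Matrix.mul_apply] at hxy
      by_cases hx : x = e
      · simp [N, hx] at hxy
      · have : (N ^ m) (π x) y ≠ 0 := by simpa [N, hx] using hxy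
        cases i with
        | zero => simpa using hx
        | succ i =>
          rw [pow_succ, Perm.mul_apply]
          exact ih _ _ this i (by omega)
  refine ⟨orderOf π, ?_⟩
  ext x y
  by_contra hne
  obtain ⟨i, hi, hi2⟩ := (h x).symm.exists_pow_eq'
  exact key _ x y hne i hi hi2

theorem det_AM_full {α : Type*} [Fintype α] [DecidableEq α] (π : Perm α) (e : α)
    (h : ∀ x, π.SameCycle e x) : (AM π e).det = Fintype.card α := by
  have h1 := det_one_sub_nil _ (nil_of_full π e h)
  set N : Matrix α α ℚ := Matrix.of fun x y => if x = e then 0 else if y = π x then (1:ℚ) else 0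
  let L : Matrix α α ℚ := Matrix.updateRow 1 e (fun _ => 1)
  let R : Matrix α α ℚ := Matrix.updateCol 1 e (fun x => if x = e then (Fintype.card α : ℚ) else 1)
  have hL : L.det = 1 := by
    rw [← Matrix.det_transpose, ← Matrix.updateCol_transpose, ← Matrix.cramer_apply]
    simp
  have hR : R.det = Fintype.card α := by
    rw [← Matrix.cramer_apply]
    simp
  have hLR : L * AM π e = R * (1 - N) := by
    ext x y
    simp only [Matrix.mul_apply, L, R, Matrix.updateRow_apply, Matrix.updateCol_apply]
    by_cases hx : x = e
    · subst hx
      have : ∀ z, (y = π z) = (z = π.symm y) := by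
        intro z; rw [eq_iff_iff, Equiv.eq_symm_apply, eq_comm]
      simp [AM, N, Finset.sum_add_distrib, Finset.sum_sub_distrib, this, Matrix.one_apply,
        mul_sub]
      rw [Finset.sum_eq_zero]
      · by_cases hy : y = x <;> simp [hy, Ne.symm]
      · intro z _
        split_ifs <;> first | rfl | simp_all
    · have h3 : ∀ z, (if z = e then (if x = e then (Fintype.card α : ℚ) else 1) else (1 : Matrix α α ℚ) x z)
        = (if z = e then 1 else 0) + (if z = x then 1 else 0) := by
        intro z
        rw [Matrix.one_apply]
        by_cases h4 : z = e
        · subst h4; simp [hx, Ne.symm hx]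
        · simp [h4, eq_comm]
      simp only [h3]
      simp [hx, AM, N, Matrix.one_apply, add_mul, Finset.sum_add_distrib]
      simp only [eq_comm (a := e)]
      ring
  have := congrArg Matrix.det hLR
  rw [Matrix.det_mul, Matrix.det_mul, hL, hR, h1] at this
  simpa using this

theorem count_perm {B : Type*} [Fintype B] [DecidableEq B] (i a : B) :
    (Fintype.card B : ℚ) * ∑ σ : Perm B, (if a = σ i then (1:ℚ) else 0)
      = (Fintype.card B).factorial := by
  have h1 : ∀ c : B, ∑ σ : Perm B, (if c = σ i then (1:ℚ) else 0)
      = ∑ σ : Perm B, (if a = σ i then (1:ℚ) else 0) := by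
    intro c
    rw [← Equiv.sum_comp (Equiv.mulLeft (swap a c))]
    refine Finset.sum_congr rfl fun σ _ => ?_
    have : (c = swap a c (σ i)) ↔ a = σ i := by
      rw [← Equiv.symm_apply_eq]; simp
    simp [this]
  have h2 : ∑ c : B, ∑ σ : Perm B, (if c = σ i then (1:ℚ) else 0) = (Fintype.card B).factorial := by
    rw [Finset.sum_comm]
    simp [Fintype.card_perm]
  rw [← h2, Finset.sum_congr rfl fun c _ => h1 c]
  simp

theorem block {V B : Type*} [Fintype V] [DecidableEq V] [Fintype B] [DecidableEq B]
    (v : V) (s : B → Prop) [DecidablePred s] (y : B → V × B) (u : B → ℚ)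
    (hs : ∀ i i', ¬ s i → ¬ s i' → i = i') :
    ∑ σ : Perm B, ∏ i, (if s i then u i else -(if y i = (v, σ i) then (1:ℚ) else 0))
      = (Fintype.card B).factorial *
        ∏ i, (if s i then u i else -(if (y i).1 = v then (1:ℚ) / Fintype.card B else 0)) := by
  by_cases hall : ∀ i, s i
  · simp [hall, Fintype.card_perm]
  · push Not at hall
    obtain ⟨i₀, h0⟩ := hall
    have h1 : ∀ i ∈ univ.erase i₀, s i := by
      intro i hi
      by_contra h
      exact (Finset.ne_of_mem_erase hi) (hs _ _ h h0)
    have h2 : ∀ g : B → ℚ, ∏ i, (if s i then u i else g i) = g i₀ * ∏ i ∈ univ.erase i₀, u i := by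
      intro g
      rw [← Finset.mul_prod_erase univ _ (mem_univ i₀), if_neg h0]
      congr 1
      exact Finset.prod_congr rfl fun i hi => if_pos (h1 i hi)
    simp only [h2]
    rw [← Finset.sum_mul, ← mul_assoc]
    congr 1
    have hB : (Fintype.card B : ℚ) ≠ 0 := by
      have : 0 < Fintype.card B := Fintype.card_pos_iff.mpr ⟨i₀⟩
      positivity
    rw [Finset.sum_neg_distrib, mul_neg, ← count_perm i₀ (y i₀).2]
    by_cases hv : (y i₀).1 = v
    · simp [hv, Prod.ext_iff]
      field_simp
    · simp [hv, Prod.ext_iff]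

theorem avg {V B : Type*} [Fintype V] [DecidableEq V] [Fintype B] [DecidableEq B]
    (U : Matrix (V × B) (V × B) ℚ) :
    ∑ h : V → Perm B, Matrix.det (Matrix.of fun x y =>
        U x y - if y = (x.1, h x.1 x.2) then (1:ℚ) else 0)
      = ((Fintype.card B).factorial : ℚ) ^ (Fintype.card V) * Matrix.det (Matrix.of fun x y =>
        U x y - if y.1 = x.1 then (1:ℚ) / Fintype.card B else 0) := by
  have exp : ∀ W : Matrix (V × B) (V × B) ℚ, Matrix.det (Matrix.of fun x y => U x y - W x y)
      = ∑ s : Finset (V × B), Matrix.det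
        (Matrix.of fun x y => if x ∈ s then U x y else - W x y) := by
    intro W
    have := (Matrix.detRowAlternating (n := V × B) (R := ℚ)).map_add_univ
      (fun x y => U x y) (fun x y => - W x y)
    have e1 : ((fun x y => U x y) + (fun x y => - W x y) : V × B → V × B → ℚ)
      = fun x y => U x y - W x y := by
      ext x y; simp [sub_eq_add_neg]
    rw [e1] at this
    refine Eq.trans this ?_
    refine Finset.sum_congr rfl fun s _ => ?_
    change Matrix.det _ = _
    congr 1
    ext x y
    simp only [Finset.piecewise, Matrix.of_apply]
    split_ifs <;> rfl
  have e2 := fun h : V → Perm B => exp (Matrix.of fun x y => if y = (x.1, h x.1 x.2) then (1:ℚ) else 0)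
  have e3 := exp (Matrix.of fun x y => if y.1 = x.1 then (1:ℚ) / Fintype.card B else 0)
  simp only [Matrix.of_apply] at e2 e3
  simp only [e2, e3]
  rw [Finset.sum_comm, Finset.mul_sum]
  refine Finset.sum_congr rfl fun s _ => ?_
  by_cases hs : ∀ v : V, ∀ i i' : B, (v, i) ∉ s → (v, i') ∉ s → i = i'
  · have lz : ∀ M : Matrix (V × B) (V × B) ℚ, M.det
        = ∑ σ : Perm (V × B), ((Perm.sign σ : ℤ) : ℚ) * ∏ v, ∏ i, M (v, i) (σ (v, i)) := by
      intro M
      rw [← Matrix.det_transpose, Matrix.det_apply']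
      simp [Fintype.prod_prod_type]
    simp only [lz, Matrix.of_apply]
    rw [Finset.sum_comm, Finset.mul_sum]
    refine Finset.sum_congr rfl fun σ _ => ?_
    rw [← Finset.mul_sum, mul_left_comm]
    congr 1
    rw [← Fintype.prod_sum (fun v (τ : Perm B) => ∏ i, if (v, i) ∈ s then U (v, i) (σ (v, i))
      else -(if σ (v, i) = (v, τ i) then (1:ℚ) else 0))]
    rw [Finset.prod_congr rfl fun v _ => block v (fun i => (v, i) ∈ s) (fun i => σ (v, i))
      (fun i => U (v, i) (σ (v, i))) (hs v)]
    rw [Finset.prod_mul_distrib]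
    simp
  · push Not at hs
    obtain ⟨v, i, i', hi, hi', hne⟩ := hs
    have hne' : (v, i) ≠ (v, i') := by simpa using hne
    have r : Matrix.det (Matrix.of fun (x y : V × B) => if x ∈ s then U x y else
        -(if y.1 = x.1 then (1:ℚ) / Fintype.card B else 0)) = 0 := by
      apply Matrix.det_zero_of_row_eq hne'
      ext y
      simp [hi, hi']
    rw [r, mul_zero]
    set F : (V → Perm B) → ℚ := fun h => Matrix.det (Matrix.of fun (x y : V × B) =>
      if x ∈ s then U x y else -(if y = (x.1, h x.1 x.2) then (1:ℚ) else 0)) with hF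
    change ∑ h, F h = 0
    have hneg : ∀ h, F (h * Pi.mulSingle v (swap i i')) = - F h := by
      intro h
      have := Matrix.det_permute (swap (v, i) (v, i')) (Matrix.of fun (x y : V × B) =>
        if x ∈ s then U x y else -(if y = (x.1, h x.1 x.2) then (1:ℚ) else 0))
      rw [Perm.sign_swap hne'] at this
      simp only [hF]
      refine Eq.trans ?_ (this.trans (by simp))
      congr 1
      ext x y
      simp only [Matrix.of_apply, Matrix.submatrix_apply, id]
      by_cases h1 : x = (v, i)
      · subst h1; simp [hi, hi']
      by_cases h2 : x = (v, i')
      · subst h2; simp [hi, hi']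
      rw [swap_apply_of_ne_of_ne h1 h2]
      obtain ⟨w, c⟩ := x
      by_cases hw : w = v
      · subst hw
        have h1' : c ≠ i := by simpa using h1
        have h2' : c ≠ i' := by simpa using h2
        simp [swap_apply_of_ne_of_ne h1' h2']
      · simp [hw]
    have hsum := Equiv.sum_comp (Equiv.mulRight (Pi.mulSingle v (swap i i') : V → Perm B)) F
    simp only [Equiv.coe_mulRight, hneg, Finset.sum_neg_distrib] at hsum
    linarith

theorem syl {α β : Type*} [Fintype α] [DecidableEq α] [Fintype β] [DecidableEq β]
    (f : α → β) (Y : Matrix β α ℚ) (e : α) :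
    Matrix.det (Matrix.of fun x y : α => (if x = y then 1 else 0) - Y (f x) y
      + (if y = e then (1:ℚ) else 0))
    = Matrix.det (Matrix.of fun x y : β => (if x = y then 1 else 0)
      - (∑ z, if y = f z then Y x z else 0) + (if y = f e then (1:ℚ) else 0)) := by
  let X : Matrix α β ℚ := Matrix.of fun x y => if y = f x then 1 else 0
  let Z : Matrix β α ℚ := Matrix.of fun x y => Y x y - if y = e then 1 else 0
  have := Matrix.det_one_sub_mul_comm X Z
  convert this using 2
  · ext x y
    simp [X, Z, Matrix.mul_apply, Matrix.one_apply]
    ring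
  · ext x y
    simp [X, Z, Matrix.mul_apply, Matrix.one_apply, sub_mul, Finset.sum_sub_distrib]
    rw [sub_add]
    have h5 : ∀ z, (if y = f z then Y x z - (if z = e then 1 else 0) else 0)
        = (if y = f z then Y x z else 0) - (if z = e then (if y = f z then (1:ℚ) else 0) else 0) := by
      intro z
      split_ifs <;> simp
    simp only [h5, Finset.sum_sub_distrib]
    simp

theorem step_succ (b s n : ℕ) (p : (Fin (s+1) → Fin b) × ZMod n) (a : Fin b) :
    astuteStep b (s+1) n p a = (Fin.snoc (α := fun _ => Fin b) (Fin.tail p.1) a, p.2 + 1) := by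
  ext : 1
  · funext i
    simp only [astuteStep, Fin.snoc, Fin.tail]
    by_cases h : (i : ℕ) < s
    · simp [h]; rfl
    · simp [h]
  · rfl

theorem step_eq (b s n : ℕ) (p : (Fin s → Fin b) × ZMod n) (a : Fin b) :
    astuteStep b s n p a = (Fin.tail (Fin.snoc (α := fun _ => Fin b) p.1 a), p.2 + 1) := by
  ext : 1
  · funext i
    simp only [astuteStep, Fin.snoc, Fin.tail]
    by_cases h : (i : ℕ) + 1 < s
    · simp [h]; rfl
    · simp [h]
  · rfl

theorem detN (b j : ℕ) (hb : 2 ≤ b) [NeZero j] (s : ℕ) (e : (Fin s → Fin b) × ZMod j) :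
    Matrix.det (Matrix.of fun p q : (Fin s → Fin b) × ZMod j =>
      (if p = q then 1 else 0) - (∑ a : Fin b, if q = astuteStep b s j p a then (1:ℚ) / b else 0)
        + (if q = e then (1:ℚ) else 0)) = j := by
  have hb0 : (b : ℚ) ≠ 0 := by
    have : 0 < b := by omega
    positivity
  induction s with
  | zero =>
    let π : Perm ((Fin 0 → Fin b) × ZMod j) := (Equiv.refl _).prodCongr (Equiv.addRight 1)
    have hfull : ∀ x, π.SameCycle e x := by
      have h1 : ∀ m : ℕ, ∀ x, (π ^ m) x = (x.1, x.2 + m) := by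
        intro m
        induction m with
        | zero => intro x; simp
        | succ m ih =>
          intro x
          rw [pow_succ', Perm.mul_apply, ih]
          simp [π, add_assoc]
      intro x
      refine ⟨((x.2 - e.2).val : ℤ), ?_⟩
      rw [zpow_natCast, h1]
      ext : 1
      · exact Subsingleton.elim _ _
      · simp
    have := det_AM_full π e hfull
    convert this using 2
    · ext p q
      have h2 : ∀ a, astuteStep b 0 j p a = π p := by
        intro a
        ext : 1
        · exact Subsingleton.elim _ _
        · rfl
      simp only [Matrix.of_apply, AM, h2]
      congr 2
      by_cases h : q = π p <;> simp [h, hb0]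
    · simp [ZMod.card]
  | succ s ih =>
    let f : (Fin (s+1) → Fin b) × ZMod j → (Fin s → Fin b) × ZMod j :=
      fun p => (Fin.tail p.1, p.2 + 1)
    let Y : Matrix ((Fin s → Fin b) × ZMod j) ((Fin (s+1) → Fin b) × ZMod j) ℚ :=
      Matrix.of fun q p => ∑ a : Fin b,
        if p = (Fin.snoc (α := fun _ => Fin b) q.1 a, q.2) then (1:ℚ) / b else 0
    have := syl f Y e
    rw [← ih (f e)]
    convert this using 2
    · ext p q
      simp only [Matrix.of_apply, step_succ, f, Y]
    · ext p q
      simp only [Matrix.of_apply, step_eq, f, Y]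
      congr 2
      have : ∀ z : (Fin (s+1) → Fin b) × ZMod j, (if q = (Fin.tail z.1, z.2 + 1) then
          (∑ a : Fin b, if z = (Fin.snoc (α := fun _ => Fin b) p.1 a, p.2) then (1:ℚ) / b else 0)
          else 0) = ∑ a : Fin b, if z = (Fin.snoc (α := fun _ => Fin b) p.1 a, p.2) then
            (if q = (Fin.tail z.1, z.2 + 1) then (1:ℚ) / b else 0) else 0 := by
        intro z
        by_cases h : q = (Fin.tail z.1, z.2 + 1) <;> simp [h]
      rw [Finset.sum_congr rfl fun z _ => this z, Finset.sum_comm]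
      simp

theorem exists_tau (b s j : ℕ) [NeZero j] :
    ∃ τ : Perm (((Fin s → Fin b) × ZMod j) × Fin b),
      ∀ e, (τ e).1 = astuteStep b s j e.1 e.2 := by
  let g : ((Fin s → Fin b) × ZMod j) × Fin b → ((Fin s → Fin b) × ZMod j) × Fin b :=
    fun e => (astuteStep b s j e.1 e.2, if h : 0 < s then e.1.1 ⟨0, h⟩ else e.2)
  have hg : Function.Injective g := by
    rintro ⟨⟨w, i⟩, a⟩ ⟨⟨w', i'⟩, a'⟩ h
    simp only [g, astuteStep, Prod.mk.injEq] at h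
    obtain ⟨⟨h1, h2⟩, h3⟩ := h
    have hi : i = i' := add_right_cancel h2
    have hw : w = w' := by
      funext x
      obtain ⟨x, hx⟩ := x
      cases x with
      | zero => simpa [hx] using h3
      | succ x =>
        have := congrFun h1 ⟨x, by omega⟩
        simpa [hx] using this
    have ha : a = a' := by
      by_cases hs : 0 < s
      · have := congrFun h1 ⟨s - 1, by omega⟩
        have hn : ¬ (s - 1 + 1 < s) := by omega
        simpa [hn] using this
      · simpa [hs] using h3
    rw [hi, hw, ha]
  exact ⟨Equiv.ofBijective g (Finite.injective_iff_bijective.mp hg), fun e => rfl⟩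

/-- successor permutation -/
def succPerm {V B : Type*} (τ : Perm (V × B)) (h : V → Perm B) : Perm (V × B) :=
  τ.trans (Equiv.prodShear (Equiv.refl V) h)

theorem sum_det (b s j : ℕ) (hb : 2 ≤ b) [NeZero j]
    (τ : Perm (((Fin s → Fin b) × ZMod j) × Fin b))
    (hτ : ∀ e, (τ e).1 = astuteStep b s j e.1 e.2) (e : ((Fin s → Fin b) × ZMod j) × Fin b) :
    ∑ h : (Fin s → Fin b) × ZMod j → Perm (Fin b), (AM (succPerm τ h) e).det
      = (b.factorial : ℚ) ^ (j * b ^ s) * j := by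
  let U : Matrix (((Fin s → Fin b) × ZMod j) × Fin b) (((Fin s → Fin b) × ZMod j) × Fin b) ℚ :=
    Matrix.of fun z y => (if τ.symm z = y then 1 else 0) + (if y = e then 1 else 0)
  have h1 := avg U
  have hp : ∀ M : Matrix (((Fin s → Fin b) × ZMod j) × Fin b) (((Fin s → Fin b) × ZMod j) × Fin b) ℚ,
      (M.submatrix τ id).det = ((Perm.sign τ : ℤ) : ℚ) * M.det := fun M => Matrix.det_permute τ M
  have h2 : ∀ h : (Fin s → Fin b) × ZMod j → Perm (Fin b), (AM (succPerm τ h) e).det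
      = ((Perm.sign τ : ℤ) : ℚ) * Matrix.det (Matrix.of fun x y =>
        U x y - if y = (x.1, h x.1 x.2) then (1:ℚ) else 0) := by
    intro h
    rw [← hp]
    congr 1
    ext x y
    simp [AM, U, succPerm, Equiv.prodShear]
    rw [sub_add_eq_add_sub]
    congr
  simp only [h2]
  rw [← Finset.mul_sum, h1, mul_left_comm, ← hp]
  congr 1
  · simp [ZMod.card, mul_comm]
  · let Y : Matrix ((Fin s → Fin b) × ZMod j) (((Fin s → Fin b) × ZMod j) × Fin b) ℚ :=
      Matrix.of fun q p => if p.1 = q then (1:ℚ) / b else 0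
    have h3 := syl (fun x : ((Fin s → Fin b) × ZMod j) × Fin b => astuteStep b s j x.1 x.2) Y e
    rw [← detN b j hb s (astuteStep b s j e.1 e.2)]
    refine Eq.trans ?_ (h3.trans ?_)
    · congr 1
      ext x y
      simp [U, Y, hτ]
      ring
    · congr 1
      ext x y
      simp only [Matrix.of_apply, Y]
      congr 2
      rw [Fintype.sum_prod_type, Finset.sum_eq_single x]
      · simp
      · intro z _ hz
        simp [hz]
      · simp

theorem count_full (b s j : ℕ) (hb : 2 ≤ b) [NeZero j]
    (τ : Perm (((Fin s → Fin b) × ZMod j) × Fin b))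
    (hτ : ∀ e, (τ e).1 = astuteStep b s j e.1 e.2) (e : ((Fin s → Fin b) × ZMod j) × Fin b) :
    Nat.card {h : (Fin s → Fin b) × ZMod j → Perm (Fin b) // ∀ x, (succPerm τ h).SameCycle e x}
      * b ^ (s + 1) = b.factorial ^ (j * b ^ s) := by
  classical
  have h1 := sum_det b s j hb τ hτ e
  have h2 : ∀ h : (Fin s → Fin b) × ZMod j → Perm (Fin b), (AM (succPerm τ h) e).det
      = if ∀ x, (succPerm τ h).SameCycle e x then ((j * b ^ (s + 1) : ℕ) : ℚ) else 0 := by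
    intro h
    split_ifs with hh
    · rw [det_AM_full _ _ hh]
      simp [ZMod.card]
      ring
    · exact det_AM_nonfull _ _ hh
  simp only [h2] at h1
  rw [← Finset.sum_filter, Finset.sum_const, nsmul_eq_mul] at h1
  rw [Nat.card_eq_fintype_card, Fintype.card_subtype]
  have h3 : (#{h : (Fin s → Fin b) × ZMod j → Perm (Fin b) | ∀ x, (succPerm τ h).SameCycle e x})
      * (j * b ^ (s+1)) = b.factorial ^ (j * b ^ s) * j := by
    exact_mod_cast h1
  have hj : 0 < j := Nat.pos_of_ne_zero (NeZero.ne j)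
  apply Nat.eq_of_mul_eq_mul_right hj
  rw [← h3]
  ring

theorem circ_card {E : Type*} [Fintype E] (n : ℕ) (hn : 0 < n) (hcard : Fintype.card E = n)
    (Q : E → E → Prop) (e₀ : E) :
    Nat.card {c : Fin n → E // (∀ i : Fin n, Q (c i) (c ⟨((i : ℕ) + 1) % n, Nat.mod_lt _ hn⟩)) ∧
      Function.Bijective c ∧ c ⟨0, hn⟩ = e₀}
    = Nat.card {π : Perm E // (∀ e, Q e (π e)) ∧ ∀ x, π.SameCycle e₀ x} := by
  classical
  have cyc : ∀ π : Perm E, (∀ x, π.SameCycle e₀ x) → π.IsCycleOn ((univ : Finset E) : Set E) := by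
    intro π h
    refine ⟨by simpa [Set.bijOn_univ] using π.bijective, fun x _ y _ => (h x).symm.trans (h y)⟩
  have surj : ∀ π : Perm E, (∀ x, π.SameCycle e₀ x) → ∀ x, ∃ i < n, (π ^ i) e₀ = x := by
    intro π h x
    have := (cyc π h).exists_pow_eq (mem_univ e₀) (mem_univ x)
    rwa [Finset.card_univ, hcard] at this
  have per : ∀ π : Perm E, (∀ x, π.SameCycle e₀ x) → (π ^ n) e₀ = e₀ := by
    intro π h
    have := (cyc π h).pow_card_apply (mem_univ e₀)
    rwa [Finset.card_univ, hcard] at this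
  have wrap : ∀ π : Perm E, (∀ x, π.SameCycle e₀ x) → ∀ i < n,
      (π ^ ((i + 1) % n)) e₀ = π ((π ^ i) e₀) := by
    intro π h i hi
    rw [← Perm.mul_apply, ← pow_succ']
    by_cases h1 : i + 1 < n
    · rw [Nat.mod_eq_of_lt h1]
    · have : i + 1 = n := by omega
      rw [this, Nat.mod_self, per π h]; rfl
  symm
  refine Nat.card_eq_of_bijective (fun π => ⟨fun i => (π.1 ^ (i : ℕ)) e₀, ?_, ?_, ?_⟩) ⟨?_, ?_⟩
  · intro i
    have := wrap π.1 π.2.2 i i.2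
    simp only [this]
    exact π.2.1 _
  · rw [Fintype.bijective_iff_surjective_and_card]
    refine ⟨fun x => ?_, by simp [hcard]⟩
    obtain ⟨i, hi, h⟩ := surj π.1 π.2.2 x
    exact ⟨⟨i, hi⟩, h⟩
  · simp
  · intro π π' h
    have h1 : ∀ i < n, (π.1 ^ i) e₀ = (π'.1 ^ i) e₀ := by
      intro i hi
      have := congrFun (congrArg Subtype.val h) ⟨i, hi⟩
      exact this
    apply Subtype.ext
    ext x
    obtain ⟨i, hi, rfl⟩ := surj π.1 π.2.2 x
    rw [← wrap π.1 π.2.2 i hi, h1 i hi, ← wrap π'.1 π'.2.2 i hi]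
    exact h1 _ (Nat.mod_lt _ hn)
  · rintro ⟨c, hc1, hc2, hc3⟩
    let rot : Fin n → Fin n := fun i => ⟨((i : ℕ) + 1) % n, Nat.mod_lt _ hn⟩
    have hrot : Function.Injective rot := by
      intro i i' h
      have h1 : ((i : ℕ) + 1) % n = ((i' : ℕ) + 1) % n := congrArg Fin.val h
      have h2 : (i : ℕ) ≡ i' [MOD n] := Nat.ModEq.add_right_cancel' 1 h1
      exact Fin.ext (Nat.ModEq.eq_of_lt_of_lt h2 i.2 i'.2)
    let ρ : Perm (Fin n) := Equiv.ofBijective rot (Finite.injective_iff_bijective.mp hrot)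
    let ce : Fin n ≃ E := Equiv.ofBijective c hc2
    let π : Perm E := (ce.symm.trans ρ).trans ce
    have hπ : ∀ i, π (c i) = c (rot i) := by
      intro i
      have : ce.symm (c i) = i := ce.symm_apply_apply i
      simp only [π, Equiv.trans_apply, this]
      rfl
    have hpow : ∀ m : ℕ, (π ^ m) e₀ = c ⟨m % n, Nat.mod_lt _ hn⟩ := by
      intro m
      induction m with
      | zero => simp [hc3]
      | succ m ih =>
        rw [pow_succ', Perm.mul_apply, ih, hπ]
        congr 1
        simp [rot]
    refine ⟨⟨π, ?_, ?_⟩, ?_⟩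
    · intro e
      obtain ⟨i, rfl⟩ := hc2.2 e
      rw [hπ]
      exact hc1 i
    · intro x
      obtain ⟨i, rfl⟩ := hc2.2 x
      refine ⟨((i : ℕ) : ℤ), ?_⟩
      rw [zpow_natCast, hpow]
      congr 1
      exact Fin.ext (Nat.mod_eq_of_lt i.2)
    · apply Subtype.ext
      funext i
      change (π ^ (i : ℕ)) e₀ = c i
      rw [hpow]
      congr 1
      exact Fin.ext (Nat.mod_eq_of_lt i.2)

theorem perm_card {V B : Type*} [Finite B] (τ : Perm (V × B)) (e₀ : V × B) :
    Nat.card {π : Perm (V × B) // (∀ e, (π e).1 = (τ e).1) ∧ ∀ x, π.SameCycle e₀ x}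
    = Nat.card {h : V → Perm B // ∀ x, (succPerm τ h).SameCycle e₀ x} := by
  symm
  refine Nat.card_eq_of_bijective (fun h => ⟨succPerm τ h.1, fun e => rfl, h.2⟩) ⟨?_, ?_⟩
  · intro h h' hh
    apply Subtype.ext
    funext v
    ext i : 1
    have := DFunLike.congr_fun (congrArg Subtype.val hh) (τ.symm (v, i))
    simpa [succPerm, Equiv.prodShear] using this
  · rintro ⟨π, h1, h2⟩
    have hinj : ∀ v, Function.Injective (fun i => (π (τ.symm (v, i))).2) := by
      intro v i i' h
      have : π (τ.symm (v, i)) = π (τ.symm (v, i')) := by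
        apply Prod.ext
        · simp [h1]
        · exact h
      simpa using this
    let h : V → Perm B := fun v => Equiv.ofBijective _ (Finite.injective_iff_bijective.mp (hinj v))
    have hs : succPerm τ h = π := by
      ext e : 1
      apply Prod.ext
      · exact (h1 e).symm
      · simp [succPerm, Equiv.prodShear, h]
    exact ⟨⟨h, by rw [hs]; exact h2⟩, Subtype.ext hs⟩

theorem main_aux (b s j : ℕ) (hb : 2 ≤ b) (hj : 1 ≤ j) (hn : 0 < j * b ^ (s + 1))
    (e₀ : ((Fin s → Fin b) × ZMod j) × Fin b) :
    Nat.card {c : Fin (j * b ^ (s + 1)) → ((Fin s → Fin b) × ZMod j) × Fin b //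
      (∀ i : Fin (j * b ^ (s + 1)),
        (c ⟨((i : ℕ) + 1) % (j * b ^ (s + 1)), Nat.mod_lt _ hn⟩).1 =
          astuteStep b s j (c i).1 (c i).2) ∧
      Function.Bijective c ∧ c ⟨0, hn⟩ = e₀} * b ^ (s + 1) =
    (Nat.factorial b) ^ (j * b ^ s) := by
  haveI : NeZero j := ⟨by omega⟩
  obtain ⟨τ, hτ⟩ := exists_tau b s j
  rw [← count_full b s j hb τ hτ e₀, ← perm_card]
  congr 1
  simp only [hτ]
  refine circ_card (j * b ^ (s + 1)) hn ?_ (fun e e' => e'.1 = astuteStep b s j e.1 e.2) e₀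
  simp [ZMod.card]
  ring

end AstuteAux


/-- The number of Eulerian circuits in the astute graph `G_{k−1,j}` equals
`(b!)^{j·b^{k−1}} · b^{−k}`. Eulerian circuits are counted as cyclic sequences
using all `j·b^k` edges exactly once, normalized by fixing the starting edge `e₀`;
the count is stated multiplicatively to avoid division: `#circuits · b^k = (b!)^{j·b^{k−1}}`. -/
theorem count_eulerian_astute (b k j : ℕ) (hb : 2 ≤ b) (hk : 1 ≤ k) (hj : 1 ≤ j)
    (e₀ : ((Fin (k - 1) → Fin b) × ZMod j) × Fin b) :
    Nat.card {c : Fin (j * b ^ k) → ((Fin (k - 1) → Fin b) × ZMod j) × Fin b //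
      (∀ i : Fin (j * b ^ k),
        (c ⟨((i : ℕ) + 1) % (j * b ^ k),
            Nat.mod_lt _ (Nat.mul_pos hj (pow_pos (by omega) k))⟩).1 =
          astuteStep b (k - 1) j (c i).1 (c i).2) ∧
      Function.Bijective c ∧
      c ⟨0, Nat.mul_pos hj (pow_pos (by omega) k)⟩ = e₀} * b ^ k =
    (Nat.factorial b) ^ (j * b ^ (k - 1)) := by
  obtain ⟨s, rfl⟩ : ∃ s, k = s + 1 := ⟨k - 1, by omega⟩
  exact AstuteAux.main_aux b s j hb hj _ e₀
end
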